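/- Existence of irreducible highest weight modules: For every weight Λ = (λ_a[n])_{1≤a≤M+N, n≥1} with λ_a[n] ∈ ℂ, there exists an irreducible Y(gl(M|N))-module V(Λ) containing a maximal vector of weight Λ. -/

import Mathlib

/-!
The irreducible module is `Y ⧸ m`, where `Y = Y(gl(M|N))` and `m` is a maximal left ideal containing
the left ideal generated by the `t^a_b[n]` with `a < b` and the `t^a_a[n] - λ_a[n]`. What has to be
shown is that this left ideal is proper. If it contained `1`, then finitely many generators would
already generate `1`. It is therefore enough to find, for each `K`, a module with a nonzero vector
that is killed by the `t^a_b[n]`, `a < b`, and on which `t^a_a[n]` acts by `λ_a[n]` for `n ≤ K`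
(`exists_rep_approx`). This avoids the Poincaré-Birkhoff-Witt theorem.

These modules are tensor products of oscillator modules. Multiplying the generators by powers of the
parity operator turns the defining relations into an RTT relation without gradings
(`IsTwisted.exists_rep`), and the coproduct into a plain matrix product, so that tensor products of
highest weight vectors are highest weight vectors and the highest weights, viewed as tuples of power
series with constant term `1`, multiply (`IsTwisted.tensor`).

An oscillator representation of `gl(M|N)` on a Fock space gives a linear solution of the RTT
relation (`IsOscillator.isTwisted`). With non-integral exponents allowed for the `c`-th oscillator
and a particle-hole transformation of the oscillators before it, the highest weight is `1 + α X` at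
position `c`, with `α` arbitrary, and `1` at all later positions (`Realizable.linear`). Over the
complex numbers every polynomial with constant term `1` is a product of factors `1 + α X`, and an
induction on `c` realizes any tuple of power series with constant terms `1` modulo `X ^ (K + 1)`
(`Realizable.approx`).
-/

open scoped BigOperators TensorProduct

namespace SY

/-- The parity `[a]` of an index: `0` if `a ≤ M` (1-based), `1` otherwise.  Indices are 0-based
`Fin (M+N)`, so `[a] = 0` iff `a < M`. -/
def pa (M : ℕ) {k : ℕ} (a : Fin k) : ℕ := if (a : ℕ) < M then 0 else 1

/-- Index type for the generators of the super Yangian: `(a, b, k)` encodes `t^a_b[k+1]`. -/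
abbrev Gen (M N : ℕ) := Fin (M + N) × Fin (M + N) × ℕ

/-- The free algebra on the generators. -/
abbrev F (M N : ℕ) := FreeAlgebra ℂ (Gen M N)

/-- `T M N a b n` is the free-algebra element corresponding to `t^a_b[n]` (`n ≥ 1`). -/
noncomputable def T (M N : ℕ) (a b : Fin (M + N)) (n : ℕ) : F M N :=
  FreeAlgebra.ι ℂ ((a, b, n - 1) : Gen M N)

noncomputable def sgn1 (M : ℕ) {k : ℕ} (a1 b1 a2 b2 : Fin k) : ℂ :=
  (-1 : ℂ) ^ ((pa M a1 + pa M b1) * (pa M a2 + pa M b2))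

noncomputable def sgn2 (M : ℕ) {k : ℕ} (a1 b1 a2 : Fin k) : ℂ :=
  (-1 : ℂ) ^ (pa M a1 * pa M a2 + pa M b1 * (pa M a1 + pa M a2))

/-- The defining relations of the super Yangian `Y(gl(M|N))`. -/
inductive Rel (M N : ℕ) : F M N → F M N → Prop
  | defining (a1 b1 a2 b2 : Fin (M + N)) (m n : ℕ) (hm : 1 ≤ m) (hn : 1 ≤ n) :
      Rel M N
        (T M N a1 b1 m * T M N a2 b2 n - sgn1 M a1 b1 a2 b2 • (T M N a2 b2 n * T M N a1 b1 m))
        ((if b1 = a2 then T M N a1 b2 (m + n - 1) else 0)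
          - sgn1 M a1 b1 a2 b2 • (if b2 = a1 then T M N a2 b1 (m + n - 1) else 0)
          + sgn2 M a1 b1 a2 •
              ∑ r ∈ Finset.Ico 1 (min m n),
                (T M N a2 b1 r * T M N a1 b2 (m + n - 1 - r)
                  - T M N a2 b1 (m + n - 1 - r) * T M N a1 b2 r))

/-- The super Yangian `Y(gl(M|N))` as the quotient of the free algebra by the defining
relations. -/
abbrev Y (M N : ℕ) := RingQuot (Rel M N)

/-- The generator `t^a_b[n]` of `Y(gl(M|N))` (for `n ≥ 1`). -/
noncomputable def t (M N : ℕ) (a b : Fin (M + N)) (n : ℕ) : Y M N :=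
  RingQuot.mkAlgHom ℂ (Rel M N) (T M N a b n)

/-- The generator of `Y(gl(M|N))` indexed by `g : Gen M N`, i.e. `t^a_b[k+1]` for
`g = (a,b,k)`. -/
noncomputable def tg (M N : ℕ) (g : Gen M N) : Y M N :=
  RingQuot.mkAlgHom ℂ (Rel M N) (FreeAlgebra.ι ℂ g)

/-- `g` indexes an odd generator iff `[a]+[b]` is odd. -/
abbrev oddG (M N : ℕ) (g : Gen M N) : Prop := (pa M g.1 + pa M g.2.1) % 2 = 1

/-- A representation of `Y(gl(M|N))` is irreducible if the space is nonzero and the only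
invariant subspaces are `⊥` and `⊤`. -/
def IsIrreducibleRep (M N : ℕ) {V : Type*} [AddCommGroup V] [Module ℂ V]
    (ρ : Y M N →ₐ[ℂ] Module.End ℂ V) : Prop :=
  (∃ v : V, v ≠ 0) ∧
    ∀ W : Submodule ℂ V, (∀ y : Y M N, ∀ w ∈ W, ρ y w ∈ W) → W = ⊥ ∨ W = ⊤

/-- `v` is a maximal vector of weight `Λ = (λ_a[n])`. -/
def IsMaximalVec (M N : ℕ) {V : Type*} [AddCommGroup V] [Module ℂ V]
    (ρ : Y M N →ₐ[ℂ] Module.End ℂ V) (v : V) (Λ : Fin (M + N) → ℕ → ℂ) : Prop :=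
  v ≠ 0 ∧
    (∀ a b : Fin (M + N), a < b → ∀ n : ℕ, 1 ≤ n → ρ (t M N a b n) v = 0) ∧
    (∀ (a : Fin (M + N)) (n : ℕ), 1 ≤ n → ρ (t M N a a n) v = Λ a n • v)

/-! ### The RTT relation -/

section RTT

variable {I : Type*} {B : Type*} [Ring B]

/-- The RTT relation `w (ε_ik S_ij S'_kl - ε_jl S'_kl S_ij) = z (S_kj S'_il - S'_kj S_il)` for two
matrices `S`, `S'` over a ring, where `S` stands for `S(u)` and `S'` for `S(u')`. The intended
scalars satisfy `w / z = u - u'`. -/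
def RTT (ε : I → I → ℤ) (w z : B) (S S' : I → I → B) : Prop :=
  ∀ i j k l, w * (ε i k • (S i j * S' k l) - ε j l • (S' k l * S i j)) =
    z * (S k j * S' i l - S' k j * S i l)

/-- The matrix product of two solutions with mutually commuting entries is again a solution. -/
theorem RTT.mul [Fintype I] {ε : I → I → ℤ} {w z : B} (hw : ∀ b, Commute w b)
    (hz : ∀ b, Commute z b) {S S' Q Q' : I → I → B}
    (hS : RTT ε w z S S') (hQ : RTT ε w z Q Q')
    (h1 : ∀ i j k l, Commute (S' i j) (Q k l)) (h2 : ∀ i j k l, Commute (S i j) (Q' k l)) :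
    RTT ε w z (fun i j => ∑ p, S i p * Q p j) (fun i j => ∑ p, S' i p * Q' p j) := by
  intro i j k l
  -- the entries of the two factors commute, so a product of two entries can be regrouped
  have e1 : ∀ a b c d : I, (∑ p, S a p * Q p b) * (∑ q, S' c q * Q' q d) =
      ∑ p, ∑ q, (S a p * S' c q) * (Q p b * Q' q d) := by
    intro a b c d
    rw [Finset.sum_mul_sum]
    refine Finset.sum_congr rfl fun p _ => Finset.sum_congr rfl fun q _ => ?_
    rw [mul_assoc, ← mul_assoc (Q p b), ← (h1 c q p b).eq]; simp only [mul_assoc]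
  have e2 : ∀ a b c d : I, (∑ q, S' c q * Q' q d) * (∑ p, S a p * Q p b) =
      ∑ p, ∑ q, (S' c q * S a p) * (Q' q d * Q p b) := by
    intro a b c d
    rw [Finset.sum_mul_sum, Finset.sum_comm]
    refine Finset.sum_congr rfl fun p _ => Finset.sum_congr rfl fun q _ => ?_
    rw [mul_assoc, ← mul_assoc (Q' q d), ← (h2 a p q d).eq]; simp only [mul_assoc]
  have key : ∑ p, ∑ q, (w * ε i k • (S i p * S' k q) - z * (S k p * S' i q)) * (Q p j * Q' q l) =
      ∑ p, ∑ q, (S' k q * S i p) * (w * ε j l • (Q' q l * Q p j) - z * (Q' q j * Q p l)) := by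
    have a1 : ∀ p q, w * ε i k • (S i p * S' k q) - z * (S k p * S' i q) =
        w * ε p q • (S' k q * S i p) - z * (S' k p * S i q) := by
      intro p q
      have := hS i p k q
      rw [mul_sub, mul_sub] at this
      rw [sub_eq_sub_iff_sub_eq_sub, this]
    have a2 : ∀ p q, w * ε j l • (Q' q l * Q p j) - z * (Q' q j * Q p l) =
        w * ε p q • (Q p j * Q' q l) - z * (Q q j * Q' p l) := by
      intro p q
      have := hQ p j q l
      rw [mul_sub, mul_sub] at this
      rw [eq_comm, sub_eq_sub_iff_sub_eq_sub, this]
    simp only [a1, a2, sub_mul, mul_sub, Finset.sum_sub_distrib]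
    congr 1
    · refine Finset.sum_congr rfl fun p _ => Finset.sum_congr rfl fun q _ => ?_
      simp only [smul_mul_assoc, mul_smul_comm, ← mul_assoc]
      rw [mul_assoc w, (hw _).eq]
    · rw [Finset.sum_comm]
      refine Finset.sum_congr rfl fun p _ => Finset.sum_congr rfl fun q _ => ?_
      simp only [← mul_assoc]
      rw [mul_assoc z, (hz _).eq]
  simp only [sub_mul, mul_sub, Finset.sum_sub_distrib] at key
  simp only [e1, e2, mul_sub]
  rw [sub_eq_sub_iff_sub_eq_sub]
  simp only [smul_mul_assoc, mul_smul_comm, mul_assoc, Finset.smul_sum, Finset.mul_sum] at key ⊢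
  have pull : ∀ {c : B}, (∀ b, Commute c b) → ∀ x y b : B, x * (y * (c * b)) = c * (x * (y * b)) :=
    fun hc x y b => by rw [← (hc y).left_comm, ← (hc x).left_comm]
  simp only [pull hw, pull hz] at key
  exact key

end RTT

section Coeff
open PowerSeries
variable {I : Type*} {A : Type*} [Ring A]

/-- The RTT relation for a matrix of power series in `u⁻¹`. The relation lives in `A⟦X⟧⟦X⟧`: the
inner variable `C X` is `u⁻¹`, the outer variable `X` is `u'⁻¹`, and the denominators of
`u - u' = (u'⁻¹ - u⁻¹) / (u⁻¹ u'⁻¹)` have been cleared. -/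
def RTTSeries (ε : I → I → ℤ) (S : I → I → A⟦X⟧) : Prop :=
  RTT ε (X - C X : A⟦X⟧⟦X⟧) (X * C X) (fun i j => C (S i j)) (fun i j => map C (S i j))

theorem coeff_C_mul_map (f g : A⟦X⟧) (m n : ℕ) :
    coeff m (coeff n (C f * map C g)) = coeff m f * coeff n g := by
  rw [coeff_C_mul, coeff_map, coeff_mul_C]

theorem coeff_map_mul_C (f g : A⟦X⟧) (m n : ℕ) :
    coeff m (coeff n (map C g * C f)) = coeff n g * coeff m f := by
  rw [coeff_mul_C, coeff_map, coeff_C_mul]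

theorem commute_outer (b : A⟦X⟧⟦X⟧) : Commute (X : A⟦X⟧⟦X⟧) b := (commute_X b).symm

theorem commute_inner (b : A⟦X⟧⟦X⟧) : Commute (C X : A⟦X⟧⟦X⟧) b := by
  ext n : 1
  rw [coeff_C_mul, coeff_mul_C, (commute_X _).eq]

/-- The coefficient of `u⁻ᵐ u'⁻ⁿ` in the twisted commutator
`ε_ik S_ij(u) S_kl(u') - ε_jl S_kl(u') S_ij(u)`. -/
noncomputable def comm (ε : I → I → ℤ) (S : I → I → A⟦X⟧) (i j k l : I) (m n : ℕ) : A :=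
  ε i k • (coeff m (S i j) * coeff n (S k l)) - ε j l • (coeff n (S k l) * coeff m (S i j))

theorem RTTSeries.coeff_eq {ε : I → I → ℤ} {S : I → I → A⟦X⟧} (h : RTTSeries ε S)
    (i j k l : I) (m n : ℕ) :
    comm ε S i j k l (m + 1) n - comm ε S i j k l m (n + 1) =
      coeff m (S k j) * coeff n (S i l) - coeff n (S k j) * coeff m (S i l) := by
  have := congrArg (fun b => coeff (m + 1) (coeff (n + 1) b)) (h i j k l)
  simpa only [sub_mul, mul_assoc, map_sub, coeff_succ_X_mul, coeff_C_mul (n + 1), map_zsmul,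
    coeff_C_mul_map, coeff_map_mul_C, coeff_C_mul n X, coeff_C_mul n, comm, coeff_C_mul,
    coeff_map, coeff_mul_C] using this

theorem RTTSeries.of_coeff {ε : I → I → ℤ} {S : I → I → A⟦X⟧}
    (h0 : ∀ i j k l n, comm ε S i j k l 0 n = 0) (h1 : ∀ i j k l m, comm ε S i j k l m 0 = 0)
    (h : ∀ i j k l m n, comm ε S i j k l (m + 1) n - comm ε S i j k l m (n + 1) =
      coeff m (S k j) * coeff n (S i l) - coeff n (S k j) * coeff m (S i l)) :
    RTTSeries ε S := by
  intro i j k l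
  have hc : ∀ m n, coeff m (coeff n (ε i k • (C (S i j) * map C (S k l)) -
      ε j l • (map C (S k l) * C (S i j)))) = comm ε S i j k l m n := by
    intro m n
    simp only [map_sub, map_zsmul, coeff_C_mul_map, coeff_map_mul_C, comm]
  ext n m
  rw [sub_mul, map_sub, map_sub, coeff_C_mul, mul_assoc]
  rcases n with _ | n <;> rcases m with _ | m
  · simp only [coeff_zero_X_mul, map_zero, sub_zero]
  · simp only [coeff_zero_X_mul, coeff_succ_X_mul, hc, h1, map_zero, sub_zero]
  · simp only [coeff_zero_X_mul, coeff_succ_X_mul, hc, h0, coeff_C_mul, sub_zero]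
  · simp only [coeff_succ_X_mul, hc, h]
    simp only [coeff_succ_X_mul, coeff_C_mul, map_sub, coeff_map, coeff_mul_C]

end Coeff

/-- A recursion along the antidiagonals, with zero boundary values, is solved by the truncated sum
that occurs in the defining relations of the Yangian. -/
theorem telescope {A : Type*} [AddCommGroup A] (c h : ℕ → ℕ → A)
    (c0 : ∀ n, c 0 n = 0) (c1 : ∀ m, c m 0 = 0)
    (hc : ∀ m n, c (m + 1) n - c m (n + 1) = h m n - h n m) (m n : ℕ) :
    c m n = ∑ r ∈ Finset.range (min m n), (h r (m + n - 1 - r) - h (m + n - 1 - r) r) := by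
  have gen : ∀ d : ℕ → ℕ → A, (∀ n, d 0 n = 0) →
      (∀ m n, d (m + 1) n - d m (n + 1) = h m n - h n m) → ∀ m n, d m n =
        ∑ r ∈ Finset.range m, (h r (m + n - 1 - r) - h (m + n - 1 - r) r) := by
    intro d d0 hd m
    induction m with
    | zero => intro n; simp [d0]
    | succ m ih =>
      intro n
      rw [Finset.sum_range_succ, show m + 1 + n - 1 - m = n by omega, ← hd,
        show m + 1 + n = m + (n + 1) by omega, ← ih]
      abel
  rcases le_total m n with hmn | hmn
  · rw [min_eq_left hmn, gen c c0 hc]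
  · have := gen (fun a b => c b a) c1 (fun a b => by
      rw [← neg_sub, hc, neg_sub]) n m
    rw [min_eq_right hmn, add_comm m n]
    exact this

/-! ### From twisted matrices to modules over the Yangian -/

section Twisted
open PowerSeries

variable {M k : ℕ} {V : Type*} [AddCommGroup V] [Module ℂ V]

theorem pa_eq (M : ℕ) {k : ℕ} (a : Fin k) : pa M a = 0 ∨ pa M a = 1 := by
  unfold pa; split <;> simp

/-- The sign `(-1)^([a][b])`. -/
def eps (M : ℕ) {k : ℕ} (a b : Fin k) : ℤ := (-1) ^ (pa M a * pa M b)

/-- A highest weight module in twisted form: `P` is the parity operator of the underlying superspace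
and `S i j = (-1)^[i] T_ij P^[j]`, where `T_ij = δ_ij (-1)^[i] + ∑ t^i_j[n] Xⁿ` is the generating
series of the generators (see `IsTwisted.gen` for the inverse transformation). The twist by `P`
removes the Koszul signs from the coproduct. The vector `v` is even and maximal, and `S i i` acts
on it by the scalar series `f i`. -/
structure IsTwisted (M : ℕ) {k : ℕ} {V : Type*} [AddCommGroup V] [Module ℂ V]
    (S : Fin k → Fin k → (Module.End ℂ V)⟦X⟧) (P : Module.End ℂ V) (v : V)
    (f : Fin k → ℂ⟦X⟧) : Prop where
  ne : v ≠ 0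
  P_vec : P v = v
  P_sq : P * P = 1
  P_comm : ∀ i j n, P * coeff n (S i j) = (-1 : ℂ) ^ (pa M i + pa M j) • (coeff n (S i j) * P)
  zero : ∀ i j, coeff 0 (S i j) = if i = j then P ^ pa M i else 0
  rtt : RTTSeries (eps M) S
  upper : ∀ i j, i < j → ∀ n, coeff n (S i j) v = 0
  weight : ∀ i n, coeff n (S i i) v = coeff n (f i) • v

section Graded

variable {S : Fin k → Fin k → (Module.End ℂ V)⟦X⟧} {P : Module.End ℂ V}

theorem pow_mul_coeff (hP : ∀ i j n,
      P * coeff n (S i j) = (-1 : ℂ) ^ (pa M i + pa M j) • (coeff n (S i j) * P))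
    (j a b : Fin k) (n : ℕ) :
    P ^ pa M j * coeff n (S a b) =
      (-1 : ℂ) ^ (pa M j * (pa M a + pa M b)) • (coeff n (S a b) * P ^ pa M j) := by
  rcases pa_eq M j with e | e
  · simp [e]
  · simp [e, hP]

theorem comm_zero_left (hP : ∀ i j n,
      P * coeff n (S i j) = (-1 : ℂ) ^ (pa M i + pa M j) • (coeff n (S i j) * P))
    (hS : ∀ i j, coeff 0 (S i j) = if i = j then P ^ pa M i else 0) (i j a b : Fin k) (n : ℕ) :
    comm (eps M) S i j a b 0 n = 0 := by
  rw [comm, hS]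
  split_ifs with e
  · subst e
    rw [pow_mul_coeff hP]
    unfold eps
    generalize coeff n (S a b) * P ^ pa M i = x
    rcases pa_eq M i with e1 | e1 <;>
      rcases pa_eq M a with e3 | e3 <;> rcases pa_eq M b with e4 | e4 <;>
      simp [e1, e3, e4]
  · simp

theorem comm_zero_right (hP : ∀ i j n,
      P * coeff n (S i j) = (-1 : ℂ) ^ (pa M i + pa M j) • (coeff n (S i j) * P))
    (hS : ∀ i j, coeff 0 (S i j) = if i = j then P ^ pa M i else 0) (i j a b : Fin k) (n : ℕ) :
    comm (eps M) S i j a b n 0 = 0 := by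
  rw [comm, hS]
  split_ifs with e
  · subst e
    rw [pow_mul_coeff hP]
    unfold eps
    generalize coeff n (S i j) * P ^ pa M a = x
    rcases pa_eq M i with e1 | e1 <;>
      rcases pa_eq M a with e3 | e3 <;> rcases pa_eq M j with e4 | e4 <;>
      simp [e1, e3, e4]
  · simp

end Graded

namespace IsTwisted

variable {S : Fin k → Fin k → (Module.End ℂ V)⟦X⟧} {P : Module.End ℂ V} {v : V}
  {f : Fin k → ℂ⟦X⟧}

theorem pow_pow (h : IsTwisted M S P v f) (j : Fin k) : P ^ pa M j * P ^ pa M j = 1 := by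
  rcases pa_eq M j with e | e <;> simp [e, h.P_sq]

/-- The operator by which `t^i_j[n]` acts, recovered from the twisted matrix `S`. -/
noncomputable def gen (M : ℕ) {k : ℕ} (S : Fin k → Fin k → (Module.End ℂ V)⟦X⟧)
    (P : Module.End ℂ V) (i j : Fin k) (n : ℕ) : Module.End ℂ V :=
  (-1 : ℂ) ^ pa M i • (coeff n (S i j) * P ^ pa M j)

theorem gen_mul (h : IsTwisted M S P v f) (i j a b : Fin k) (m n : ℕ) :
    gen M S P i j m * gen M S P a b n =
      (-1 : ℂ) ^ (pa M i + pa M a + pa M j * (pa M a + pa M b)) •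
        (coeff m (S i j) * coeff n (S a b) * P ^ (pa M j + pa M b)) := by
  have : coeff m (S i j) * P ^ pa M j * (coeff n (S a b) * P ^ pa M b) =
      (-1 : ℂ) ^ (pa M j * (pa M a + pa M b)) •
        (coeff m (S i j) * coeff n (S a b) * P ^ (pa M j + pa M b)) := by
    rw [mul_assoc, ← mul_assoc (P ^ pa M j), pow_mul_coeff h.P_comm, smul_mul_assoc,
      mul_smul_comm, pow_add]
    simp only [mul_assoc]
  rw [gen, gen, smul_mul_smul_comm, this, smul_smul]
  congr 1
  ring

theorem gen_comm (h : IsTwisted M S P v f) (i j a b : Fin k) (m n : ℕ) :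
    gen M S P i j m * gen M S P a b n -
        sgn1 M i j a b • (gen M S P a b n * gen M S P i j m) =
      (-1 : ℂ) ^ (pa M i + pa M a + pa M j * (pa M a + pa M b) + pa M i * pa M a) •
        (comm (eps M) S i j a b m n * P ^ (pa M j + pa M b)) := by
  rw [h.gen_mul, h.gen_mul, add_comm (pa M b) (pa M j), comm, sub_mul, smul_mul_assoc,
    smul_mul_assoc]
  generalize coeff m (S i j) * coeff n (S a b) * P ^ (pa M j + pa M b) = x
  generalize coeff n (S a b) * coeff m (S i j) * P ^ (pa M j + pa M b) = y
  unfold sgn1 eps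
  rcases pa_eq M i with e1 | e1 <;> rcases pa_eq M j with e2 | e2 <;>
    rcases pa_eq M a with e3 | e3 <;> rcases pa_eq M b with e4 | e4 <;>
    simp [e1, e2, e3, e4, pow_succ] <;> abel

theorem gen_zero (h : IsTwisted M S P v f) (i j : Fin k) :
    gen M S P i j 0 = (-1 : ℂ) ^ pa M i • (if i = j then 1 else 0) := by
  rw [gen, h.zero]
  split_ifs with e
  · subst e; rw [h.pow_pow]
  · simp

theorem gen_shift (h : IsTwisted M S P v f) (i j a b : Fin k) (m n : ℕ) :
    (gen M S P i j (m + 1) * gen M S P a b n -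
        sgn1 M i j a b • (gen M S P a b n * gen M S P i j (m + 1))) -
      (gen M S P i j m * gen M S P a b (n + 1) -
        sgn1 M i j a b • (gen M S P a b (n + 1) * gen M S P i j m)) =
      sgn2 M i j a • (gen M S P a j m * gen M S P i b n) -
        sgn2 M i j a • (gen M S P a j n * gen M S P i b m) := by
  rw [h.gen_comm, h.gen_comm, ← smul_sub, ← sub_mul, h.rtt.coeff_eq, h.gen_mul, h.gen_mul,
    sub_mul]
  generalize coeff m (S a j) * coeff n (S i b) * P ^ (pa M j + pa M b) = x
  generalize coeff n (S a j) * coeff m (S i b) * P ^ (pa M j + pa M b) = y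
  unfold sgn2
  rcases pa_eq M i with e1 | e1 <;> rcases pa_eq M j with e2 | e2 <;>
    rcases pa_eq M a with e3 | e3 <;> rcases pa_eq M b with e4 | e4 <;>
    simp [e1, e2, e3, e4, pow_succ] <;> abel

theorem gen_rel (h : IsTwisted M S P v f) (a1 b1 a2 b2 : Fin k) (m n : ℕ)
    (hm : 1 ≤ m) (hn : 1 ≤ n) :
    gen M S P a1 b1 m * gen M S P a2 b2 n -
        sgn1 M a1 b1 a2 b2 • (gen M S P a2 b2 n * gen M S P a1 b1 m) =
      (if b1 = a2 then gen M S P a1 b2 (m + n - 1) else 0)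
        - sgn1 M a1 b1 a2 b2 • (if b2 = a1 then gen M S P a2 b1 (m + n - 1) else 0)
        + sgn2 M a1 b1 a2 • ∑ r ∈ Finset.Ico 1 (min m n),
            (gen M S P a2 b1 r * gen M S P a1 b2 (m + n - 1 - r)
              - gen M S P a2 b1 (m + n - 1 - r) * gen M S P a1 b2 r) := by
  rw [telescope (fun m n => gen M S P a1 b1 m * gen M S P a2 b2 n -
        sgn1 M a1 b1 a2 b2 • (gen M S P a2 b2 n * gen M S P a1 b1 m))
      (fun m n => sgn2 M a1 b1 a2 • (gen M S P a2 b1 m * gen M S P a1 b2 n))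
      (fun n => by rw [h.gen_comm, comm_zero_left h.P_comm h.zero]; simp)
      (fun n => by rw [h.gen_comm, comm_zero_right h.P_comm h.zero]; simp)
      (fun m n => h.gen_shift a1 b1 a2 b2 m n) m n,
    Finset.range_eq_Ico, Finset.sum_eq_sum_Ico_succ_bot (by omega), Finset.smul_sum]
  simp only [← smul_sub]
  congr 1
  rw [h.gen_zero, h.gen_zero, smul_sub, Nat.sub_zero]
  congr 1
  · by_cases e : b1 = a2
    · subst e
      simp only [if_true, smul_mul_assoc, one_mul, smul_smul]
      conv_rhs => rw [← one_smul ℂ (gen M S P a1 b2 (m + n - 1))]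
      congr 1
      unfold sgn2
      rcases pa_eq M a1 with e1 | e1 <;> rcases pa_eq M b1 with e2 | e2 <;> simp [e1, e2, pow_succ]
    · simp [e, Ne.symm e]
  · by_cases e : b2 = a1
    · subst e
      simp only [if_true, mul_smul_comm, mul_one, smul_smul]
      congr 1
      unfold sgn2 sgn1
      rcases pa_eq M a2 with e1 | e1 <;> rcases pa_eq M b1 with e2 | e2 <;>
        rcases pa_eq M b2 with e3 | e3 <;> simp [e1, e2, e3, pow_succ]
    · simp [e, Ne.symm e]

end IsTwisted

/-- A twisted highest weight module is a `Y(gl(M|N))`-module whose distinguished vector satisfies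
the conditions for a maximal vector with `λ_a[n] = (-1)^[a] coeff n (f a)`. -/
theorem IsTwisted.exists_rep {M N : ℕ} {S : Fin (M + N) → Fin (M + N) → (Module.End ℂ V)⟦X⟧}
    {P : Module.End ℂ V} {v : V} {f : Fin (M + N) → ℂ⟦X⟧} (h : IsTwisted M S P v f) :
    ∃ ρ : Y M N →ₐ[ℂ] Module.End ℂ V,
      (∀ a b : Fin (M + N), a < b → ∀ n : ℕ, 1 ≤ n → ρ (t M N a b n) v = 0) ∧
      (∀ (a : Fin (M + N)) (n : ℕ), 1 ≤ n →
        ρ (t M N a a n) v = ((-1) ^ pa M a * coeff n (f a)) • v) := by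
  let φ : F M N →ₐ[ℂ] Module.End ℂ V :=
    FreeAlgebra.lift ℂ fun g : Gen M N => IsTwisted.gen M S P g.1 g.2.1 (g.2.2 + 1)
  have hφ : ∀ a b n, 1 ≤ n → φ (T M N a b n) = IsTwisted.gen M S P a b n := by
    intro a b n hn
    simp only [φ, T, FreeAlgebra.lift_ι_apply, Nat.sub_add_cancel hn]
  have hrel : ∀ ⦃x y⦄, Rel M N x y → φ x = φ y := by
    rintro _ _ ⟨a1, b1, a2, b2, m, n, hm, hn⟩
    simp only [map_add, map_sub, map_smul, map_mul, map_sum, apply_ite φ, map_zero]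
    rw [hφ _ _ _ hm, hφ _ _ _ hn, hφ _ _ (m + n - 1) (by omega), hφ _ _ (m + n - 1) (by omega),
      h.gen_rel a1 b1 a2 b2 m n hm hn]
    congr 2
    refine Finset.sum_congr rfl fun r hr => ?_
    rw [Finset.mem_Ico, lt_min_iff] at hr
    rw [hφ _ _ r (by omega), hφ _ _ r (by omega), hφ _ _ (m + n - 1 - r) (by omega),
      hφ _ _ (m + n - 1 - r) (by omega)]
  have hPv : ∀ b : Fin (M + N), (P ^ pa M b) v = v := fun b => by
    rcases pa_eq M b with e | e <;> simp [e, h.P_vec]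
  refine ⟨RingQuot.liftAlgHom ℂ ⟨φ, hrel⟩, fun a b hab n hn => ?_, fun a n hn => ?_⟩
  · rw [t, RingQuot.liftAlgHom_mkAlgHom_apply, hφ _ _ _ hn]
    simp [IsTwisted.gen, hPv, h.upper a b hab]
  · rw [t, RingQuot.liftAlgHom_mkAlgHom_apply, hφ _ _ _ hn]
    simp [IsTwisted.gen, hPv, h.weight, smul_smul]

end Twisted

/-! ### Tensor products -/

section Tensor
open PowerSeries

theorem RTTSeries.map {I A A' : Type*} [Ring A] [Ring A'] (φ : A →+* A') {ε : I → I → ℤ}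
    {S : I → I → A⟦X⟧} (h : RTTSeries ε S) :
    RTTSeries ε (fun i j => PowerSeries.map φ (S i j)) := by
  have e : ∀ g : A⟦X⟧, PowerSeries.map (PowerSeries.map φ) (PowerSeries.map C g) =
      PowerSeries.map C (PowerSeries.map φ g) := by
    intro g; ext1 n; simp only [coeff_map, map_C]
  intro i j k l
  have := congrArg (PowerSeries.map (PowerSeries.map φ)) (h i j k l)
  simpa only [map_mul, map_sub, map_zsmul, map_C, map_X, e] using this

theorem commute_C_map {A : Type*} [Ring A] {f g : A⟦X⟧}
    (h : ∀ m n, Commute (coeff m f) (coeff n g)) : Commute (C f) (map C g) := by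
  ext n m
  rw [coeff_C_mul_map, coeff_map_mul_C, (h m n).eq]

theorem RTTSeries.mul {I A : Type*} [Fintype I] [Ring A] {ε : I → I → ℤ} {S Q : I → I → A⟦X⟧}
    (hS : RTTSeries ε S) (hQ : RTTSeries ε Q)
    (h : ∀ i j a b m n, Commute (coeff m (S i j)) (coeff n (Q a b))) :
    RTTSeries ε (fun i j => ∑ p, S i p * Q p j) := by
  have := RTT.mul (w := (X - C X : A⟦X⟧⟦X⟧)) (z := X * C X)
    (fun b => (commute_outer b).sub_left (commute_inner b))
    (fun b => (commute_outer b).mul_left (commute_inner b)) hS hQ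
    (fun i j a b => (commute_C_map fun m n => (h i j a b n m).symm).symm)
    (fun i j a b => commute_C_map fun m n => h i j a b m n)
  intro i j a b
  simpa only [map_sum, map_mul] using this i j a b

variable {M k : ℕ} {V W : Type*} [AddCommGroup V] [Module ℂ V] [AddCommGroup W] [Module ℂ W]

/-- The action of `End V` on the left factor of `V ⊗ W`. -/
noncomputable def lft (V W : Type*) [AddCommGroup V] [Module ℂ V] [AddCommGroup W]
    [Module ℂ W] : Module.End ℂ V →ₐ[ℂ] Module.End ℂ (V ⊗[ℂ] W) :=
  Module.End.rTensorAlgHom ℂ V W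

/-- The action of `End W` on the right factor of `V ⊗ W`. -/
noncomputable def rgt (V W : Type*) [AddCommGroup V] [Module ℂ V] [AddCommGroup W]
    [Module ℂ W] : Module.End ℂ W →ₐ[ℂ] Module.End ℂ (V ⊗[ℂ] W) :=
  Module.End.lTensorAlgHom ℂ W V

@[simp]
theorem lft_tmul (a : Module.End ℂ V) (x : V) (y : W) : lft V W a (x ⊗ₜ y) = a x ⊗ₜ y := rfl

@[simp]
theorem rgt_tmul (b : Module.End ℂ W) (x : V) (y : W) : rgt V W b (x ⊗ₜ y) = x ⊗ₜ b y := rfl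

theorem commute_lft_rgt (a : Module.End ℂ V) (b : Module.End ℂ W) :
    Commute (lft V W a) (rgt V W b) :=
  TensorProduct.ext' fun _ _ => rfl

theorem tmul_ne_zero' {v : V} {v' : W} (h : v ≠ 0) (h' : v' ≠ 0) : v ⊗ₜ[ℂ] v' ≠ 0 := by
  rw [Ne, ← Module.forall_dual_apply_eq_zero_iff ℂ, not_forall] at h h'
  obtain ⟨d, hd⟩ := h
  obtain ⟨d', hd'⟩ := h'
  intro h0
  have := congrArg (LinearMap.mul' ℂ ℂ ∘ₗ TensorProduct.map d d') h0
  simp [hd, hd'] at this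

/-- The product of the matrices `S` and `S'`, with entries acting on the two factors of `V ⊗ W`;
this is the coproduct `S_ij ↦ ∑ p, S_ip ⊗ S_pj`, without signs. -/
noncomputable def prodSeries (S : Fin k → Fin k → (Module.End ℂ V)⟦X⟧)
    (S' : Fin k → Fin k → (Module.End ℂ W)⟦X⟧) (i j : Fin k) : (Module.End ℂ (V ⊗[ℂ] W))⟦X⟧ :=
  ∑ p, map (lft V W).toRingHom (S i p) * map (rgt V W).toRingHom (S' p j)

theorem coeff_prodSeries (S : Fin k → Fin k → (Module.End ℂ V)⟦X⟧)
    (S' : Fin k → Fin k → (Module.End ℂ W)⟦X⟧) (i j : Fin k) (n : ℕ) :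
    coeff n (prodSeries S S' i j) = ∑ p, ∑ q ∈ Finset.HasAntidiagonal.antidiagonal n,
      lft V W (coeff q.1 (S i p)) * rgt V W (coeff q.2 (S' p j)) := by
  simp only [prodSeries, map_sum, coeff_mul, coeff_map]
  rfl

theorem coeff_prodSeries_apply (S : Fin k → Fin k → (Module.End ℂ V)⟦X⟧)
    (S' : Fin k → Fin k → (Module.End ℂ W)⟦X⟧) (i j : Fin k) (n : ℕ) (v : V) (v' : W) :
    coeff n (prodSeries S S' i j) (v ⊗ₜ v') = ∑ p, ∑ q ∈ Finset.HasAntidiagonal.antidiagonal n,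
      (coeff q.1 (S i p) v) ⊗ₜ (coeff q.2 (S' p j) v') := by
  rw [coeff_prodSeries]
  simp [LinearMap.sum_apply]

theorem rtt_prodSeries {ε : Fin k → Fin k → ℤ} {S : Fin k → Fin k → (Module.End ℂ V)⟦X⟧}
    {S' : Fin k → Fin k → (Module.End ℂ W)⟦X⟧} (h : RTTSeries ε S) (h' : RTTSeries ε S') :
    RTTSeries ε (prodSeries S S') := by
  have hc : ∀ i j a b m n, Commute (coeff m (map (lft V W).toRingHom (S i j)))
      (coeff n (map (rgt V W).toRingHom (S' a b))) := by
    intro i j a b m n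
    rw [coeff_map, coeff_map]
    generalize coeff m (S i j) = x
    generalize coeff n (S' a b) = y
    exact commute_lft_rgt x y
  exact RTTSeries.mul (h.map (lft V W).toRingHom) (h'.map (rgt V W).toRingHom) hc

set_option maxHeartbeats 1000000 in
/-- Twisted highest weight modules are closed under tensor products, and the weights multiply. In
the sum over `p` defining `S_ij`, the term at `p` kills `v ⊗ v'` unless `j ≤ p ≤ i`. -/
theorem IsTwisted.tensor {S : Fin k → Fin k → (Module.End ℂ V)⟦X⟧} {P : Module.End ℂ V} {v : V}
    {f : Fin k → ℂ⟦X⟧} {S' : Fin k → Fin k → (Module.End ℂ W)⟦X⟧} {P' : Module.End ℂ W} {v' : W}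
    {f' : Fin k → ℂ⟦X⟧} (h : IsTwisted M S P v f) (h' : IsTwisted M S' P' v' f') :
    IsTwisted M (prodSeries S S') (lft V W P * rgt V W P') (v ⊗ₜ v') (fun i => f i * f' i) where
  ne := tmul_ne_zero' h.ne h'.ne
  P_vec := by simp [h.P_vec, h'.P_vec]
  P_sq := by
    rw [(commute_lft_rgt P P').symm.mul_mul_mul_comm, ← map_mul, ← map_mul, h.P_sq, h'.P_sq]
    simp
  P_comm i j n := by
    simp only [coeff_prodSeries, Finset.mul_sum, Finset.sum_mul, Finset.smul_sum]
    refine Finset.sum_congr rfl fun p _ => Finset.sum_congr rfl fun q _ => ?_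
    rw [(commute_lft_rgt _ P').symm.mul_mul_mul_comm, ← map_mul, ← map_mul, h.P_comm, h'.P_comm,
      (commute_lft_rgt P _).symm.mul_mul_mul_comm, ← map_mul, ← map_mul,
      AlgHom.map_smul_of_tower, AlgHom.map_smul_of_tower,
      smul_mul_smul_comm]
    congr 1
    rcases pa_eq M p with e | e <;> simp [e, pow_add]
  zero i j := by
    rw [coeff_prodSeries]
    simp only [Finset.Nat.antidiagonal_zero, Finset.sum_singleton, h.zero, h'.zero]
    rw [Finset.sum_eq_single i]
    · by_cases e : i = j
      · subst e
        simp only [if_true, map_pow]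
        rw [(commute_lft_rgt P P').mul_pow]
      · simp [e]
    · intro p _ hp
      simp [Ne.symm hp]
    · simp
  rtt := rtt_prodSeries h.rtt h'.rtt
  upper i j hij n := by
    rw [coeff_prodSeries_apply]
    refine Finset.sum_eq_zero fun p _ => Finset.sum_eq_zero fun q _ => ?_
    rcases lt_or_ge i p with hp | hp
    · rw [h.upper i p hp, TensorProduct.zero_tmul]
    · rw [h'.upper p j (hp.trans_lt hij), TensorProduct.tmul_zero]
  weight i n := by
    rw [coeff_prodSeries_apply, Finset.sum_eq_single i]
    · rw [coeff_mul, Finset.sum_smul]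
      refine Finset.sum_congr rfl fun q _ => ?_
      rw [h.weight, h'.weight, TensorProduct.tmul_smul, TensorProduct.smul_tmul', smul_smul,
        mul_comm, ← TensorProduct.smul_tmul']
    · intro p _ hp
      refine Finset.sum_eq_zero fun q _ => ?_
      rcases lt_or_gt_of_ne hp with hp | hp
      · rw [h'.upper p i hp, TensorProduct.tmul_zero]
      · rw [h.upper i p hp, TensorProduct.zero_tmul]
    · simp

end Tensor

/-! ### Oscillator L-operators -/

section Oscillator
open PowerSeries

variable {M k : ℕ} {V : Type*} [AddCommGroup V] [Module ℂ V]

/-- A system of annihilation operators `a` and creation operators `b` with super-commutation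
relations, oscillator `i` being fermionic if `fp i = 1` and bosonic if `fp i = 0`, together with the
parity operator `P` and a vector `v` that is maximal for the operators `b i * a j`, which represent
`gl(M|N)`. The oscillators have either the parities of the indices, or all opposite parities. -/
structure IsOscillator (M : ℕ) {k : ℕ} {V : Type*} [AddCommGroup V] [Module ℂ V]
    (fp : Fin k → ℕ) (a b : Fin k → Module.End ℂ V) (P : Module.End ℂ V) (v : V)
    (μ : Fin k → ℂ) : Prop where
  parity : (∀ i, fp i = pa M i) ∨ (∀ i, fp i = 1 - pa M i)
  aa : ∀ i j, a i * a j = (-1 : ℂ) ^ (fp i * fp j) • (a j * a i)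
  bb : ∀ i j, b i * b j = (-1 : ℂ) ^ (fp i * fp j) • (b j * b i)
  ab : ∀ i j, a i * b j = (-1 : ℂ) ^ (fp i * fp j) • (b j * a i) + if i = j then 1 else 0
  Pa : ∀ i, P * a i = (-1 : ℂ) ^ fp i • (a i * P)
  Pb : ∀ i, P * b i = (-1 : ℂ) ^ fp i • (b i * P)
  ne : v ≠ 0
  P_vec : P v = v
  P_sq : P * P = 1
  upper : ∀ i j, i < j → b i (a j v) = 0
  weight : ∀ i, b i (a i v) = μ i • v

namespace IsOscillator

variable {fp : Fin k → ℕ} {a b : Fin k → Module.End ℂ V} {P : Module.End ℂ V} {v : V}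
  {μ : Fin k → ℂ}

theorem P_mul (h : IsOscillator M fp a b P v μ) (i j : Fin k) :
    P * (b i * a j) = (-1 : ℂ) ^ (pa M i + pa M j) • (b i * a j * P) := by
  rw [← mul_assoc, h.Pb, smul_mul_assoc, mul_assoc, h.Pa, mul_smul_comm, smul_smul, ← mul_assoc]
  congr 1
  rcases h.parity with e | e <;> rw [e, e] <;> rcases pa_eq M i with e1 | e1 <;>
    rcases pa_eq M j with e2 | e2 <;> simp [e1, e2]

/-- The operators `b i * a j` satisfy the relations of the matrix units of `gl(M|N)`. -/
theorem gl_rel (h : IsOscillator M fp a b P v μ) (i j p q : Fin k) :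
    b i * a j * (b p * a q) - sgn1 M i j p q • (b p * a q * (b i * a j)) =
      (if j = p then b i * a q else 0) - sgn1 M i j p q • (if q = i then b p * a j else 0) := by
  have e : ∀ i j p q, b i * a j * (b p * a q) = (-1 : ℂ) ^ (fp j * fp p) • (b i * b p * (a j * a q))
      + if j = p then b i * a q else 0 := by
    intro i j p q
    rw [mul_assoc, ← mul_assoc (a j), h.ab, add_mul, mul_add]
    congr 1
    · simp only [smul_mul_assoc, mul_smul_comm, mul_assoc]
    · split_ifs <;> simp
  rw [e i j p q, e p q i j, h.bb p i, h.aa q j, smul_mul_smul_comm, smul_add, smul_smul, smul_smul]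
  have : (-1 : ℂ) ^ (fp j * fp p) = sgn1 M i j p q * (-1) ^ (fp q * fp i) *
      ((-1) ^ (fp p * fp i) * (-1) ^ (fp q * fp j)) := by
    unfold sgn1
    rcases h.parity with e | e <;> simp only [e] <;> rcases pa_eq M i with e1 | e1 <;>
      rcases pa_eq M j with e2 | e2 <;> rcases pa_eq M p with e3 | e3 <;>
      rcases pa_eq M q with e4 | e4 <;> simp [e1, e2, e3, e4, pow_succ]
  rw [this]
  abel

/-- The `L`-operator, linear in `X = u⁻¹`: the pullback of the oscillator representation of
`gl(M|N)` under the evaluation homomorphism `t^i_j[1] ↦ b i * a j`, in twisted form. -/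
noncomputable def lax (M : ℕ) {k : ℕ} (a b : Fin k → Module.End ℂ V) (P : Module.End ℂ V)
    (i j : Fin k) : (Module.End ℂ V)⟦X⟧ :=
  C (if i = j then P ^ pa M i else 0) + C ((-1 : ℂ) ^ pa M i • (b i * a j * P ^ pa M j)) * X

theorem coeff_zero_lax (i j : Fin k) :
    coeff 0 (lax M a b P i j) = if i = j then P ^ pa M i else 0 := by
  simp [lax]

theorem coeff_one_lax (i j : Fin k) :
    coeff 1 (lax M a b P i j) = (-1 : ℂ) ^ pa M i • (b i * a j * P ^ pa M j) := by
  rw [lax, map_add, coeff_C, coeff_C_mul, coeff_one_X]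
  simp

theorem coeff_add_two_lax (i j : Fin k) (n : ℕ) : coeff (n + 2) (lax M a b P i j) = 0 := by
  rw [lax, map_add, coeff_C, coeff_C_mul, coeff_X]
  simp

theorem P_pow_mul (h : IsOscillator M fp a b P v μ) (l i j : Fin k) :
    P ^ pa M l * (b i * a j) =
      (-1 : ℂ) ^ (pa M l * (pa M i + pa M j)) • (b i * a j * P ^ pa M l) := by
  rcases pa_eq M l with e | e
  · simp [e]
  · rw [e, pow_one, one_mul, h.P_mul]

theorem P_coeff_lax (h : IsOscillator M fp a b P v μ) (i j : Fin k) (n : ℕ) :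
    P * coeff n (lax M a b P i j) =
      (-1 : ℂ) ^ (pa M i + pa M j) • (coeff n (lax M a b P i j) * P) := by
  rcases n with _ | _ | n
  · rw [coeff_zero_lax]
    split_ifs with e
    · subst e
      rcases pa_eq M i with e | e <;> simp [e]
    · simp
  · rw [zero_add, coeff_one_lax, mul_smul_comm, ← mul_assoc, h.P_mul, smul_mul_assoc,
      smul_mul_assoc, smul_comm, mul_assoc, mul_assoc, mul_assoc, mul_assoc, ← pow_succ,
      ← pow_succ']
  · rw [coeff_add_two_lax]; simp

theorem comm_one_one (h : IsOscillator M fp a b P v μ) (i j p q : Fin k) :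
    comm (eps M) (lax M a b P) i j p q 1 1 =
      coeff 0 (lax M a b P p j) * coeff 1 (lax M a b P i q) -
        coeff 1 (lax M a b P p j) * coeff 0 (lax M a b P i q) := by
  have e : ∀ i j p q, coeff 1 (lax M a b P i j) * coeff 1 (lax M a b P p q) =
      (-1 : ℂ) ^ (pa M i + pa M p + pa M j * (pa M p + pa M q)) •
        (b i * a j * (b p * a q) * P ^ (pa M j + pa M q)) := by
    intro i j p q
    rw [coeff_one_lax, coeff_one_lax, smul_mul_smul_comm, mul_assoc (b i * a j),
      ← mul_assoc (P ^ pa M j), h.P_pow_mul, smul_mul_assoc, mul_smul_comm, smul_smul, pow_add P]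
    simp only [mul_assoc]
    congr 1
    ring
  have e2 : coeff 0 (lax M a b P p j) * coeff 1 (lax M a b P i q) =
      (-1 : ℂ) ^ (pa M i + pa M j * (pa M i + pa M q)) •
        ((if j = p then b i * a q else 0) * P ^ (pa M j + pa M q)) := by
    rw [coeff_zero_lax, coeff_one_lax]
    by_cases hp : j = p
    · subst hp
      rw [if_pos rfl, if_pos rfl, mul_smul_comm, ← mul_assoc, h.P_pow_mul, smul_mul_assoc,
        smul_smul, ← pow_add, mul_assoc, ← pow_add]
    · simp [hp, Ne.symm hp]
  have e3 : coeff 1 (lax M a b P p j) * coeff 0 (lax M a b P i q) =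
      (-1 : ℂ) ^ (pa M p) •
        ((if q = i then b p * a j else 0) * P ^ (pa M j + pa M q)) := by
    rw [coeff_zero_lax, coeff_one_lax]
    by_cases hp : q = i
    · subst hp
      rw [if_pos rfl, if_pos rfl, smul_mul_assoc, mul_assoc, ← pow_add]
    · simp [hp, Ne.symm hp]
  have g := congrArg (· * P ^ (pa M j + pa M q)) (h.gl_rel i j p q)
  simp only [sub_mul, smul_mul_assoc] at g
  rw [comm, e, e, e2, e3, add_comm (pa M q) (pa M j)]
  rw [sub_eq_iff_eq_add] at g
  rw [g]
  generalize b p * a q * (b i * a j) * P ^ (pa M j + pa M q) = y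
  by_cases hp : j = p <;> by_cases hq : q = i <;> simp only [hp, hq, if_true, if_false, zero_mul]
  · subst hp; subst hq
    generalize b q * a q * P ^ (pa M j + pa M q) = x1
    generalize b j * a j * P ^ (pa M j + pa M q) = x2
    unfold sgn1 eps
    rcases pa_eq M j with e2 | e2 <;> rcases pa_eq M q with e4 | e4 <;>
      simp [e2, e4, pow_succ] <;> abel
  · subst hp
    generalize b i * a q * P ^ (pa M j + pa M q) = x1
    unfold sgn1 eps
    rcases pa_eq M i with e1 | e1 <;> rcases pa_eq M j with e2 | e2 <;>
      rcases pa_eq M q with e4 | e4 <;> simp [e1, e2, e4, pow_succ]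
  · subst hq
    generalize b p * a j * P ^ (pa M j + pa M q) = x1
    unfold sgn1 eps
    rcases pa_eq M p with e1 | e1 <;> rcases pa_eq M j with e2 | e2 <;>
      rcases pa_eq M q with e4 | e4 <;> simp [e1, e2, e4, pow_succ]
  · unfold sgn1 eps
    rcases pa_eq M i with e1 | e1 <;> rcases pa_eq M j with e2 | e2 <;>
      rcases pa_eq M p with e3 | e3 <;> rcases pa_eq M q with e4 | e4 <;>
      simp [e1, e2, e3, e4, pow_succ]

theorem isTwisted (h : IsOscillator M fp a b P v μ) :
    IsTwisted M (lax M a b P) P v (fun i => 1 + C ((-1) ^ pa M i * μ i) * X) := by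
  have hPv : ∀ i : Fin k, (P ^ pa M i) v = v := fun i => by
    rcases pa_eq M i with e | e <;> simp [e, h.P_vec]
  refine ⟨h.ne, h.P_vec, h.P_sq, h.P_coeff_lax, coeff_zero_lax, ?_, ?_, ?_⟩
  · have hl := comm_zero_left h.P_coeff_lax (coeff_zero_lax (a := a) (b := b) (P := P))
    have hr := comm_zero_right h.P_coeff_lax (coeff_zero_lax (a := a) (b := b) (P := P))
    have h2 : ∀ i j p q m n, comm (eps M) (lax M a b P) i j p q (m + 2) n = 0 := by
      intro i j p q m n
      simp [comm, coeff_add_two_lax]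
    have h2' : ∀ i j p q m n, comm (eps M) (lax M a b P) i j p q m (n + 2) = 0 := by
      intro i j p q m n
      simp [comm, coeff_add_two_lax]
    refine RTTSeries.of_coeff hl hr fun i j p q m n => ?_
    rcases m with _ | _ | m <;> rcases n with _ | _ | n
    · simp [hl, hr]
    · simp only [zero_add, hl, sub_zero, h.comm_one_one]
    · simp only [zero_add, hl, sub_zero, h2', coeff_add_two_lax, mul_zero, zero_mul]
    · rw [show (0 + 1 : ℕ) = 1 from rfl, show (1 + 1 : ℕ) = 0 + 2 from rfl, h2, h.comm_one_one]
      abel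
    · simp [h2, h2']
    · simp only [h2, h2', coeff_add_two_lax, mul_zero, zero_mul]
    · simp only [hr, h2, coeff_add_two_lax, mul_zero, zero_mul, sub_zero]
    · simp only [h2, coeff_add_two_lax, mul_zero, zero_mul, sub_zero]
    · simp only [h2, coeff_add_two_lax, mul_zero, sub_zero]
  · intro i j hij n
    rcases n with _ | _ | n
    · rw [coeff_zero_lax, if_neg hij.ne]; rfl
    · simp [coeff_one_lax, hPv, h.upper i j hij]
    · rw [coeff_add_two_lax]; rfl
  · intro i n
    rcases n with _ | _ | n
    · simp [coeff_zero_lax, hPv]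
    · simp [coeff_one_lax, hPv, h.weight, smul_smul, coeff_one]
    · rw [coeff_add_two_lax, map_add, coeff_C_mul, coeff_X, coeff_one]
      simp

end IsOscillator
end Oscillator

/-! ### Fock spaces -/

/-- The particle-hole transformation. If all annihilation operators `A i`, `i ≠ c`, kill `v`, then
exchanging the roles of `A i` and `B i` for `i < c` makes `v` maximal for `gl(M|N)`. -/
theorem exists_isOscillator_of_vacuum {M k : ℕ} {V : Type*} [AddCommGroup V] [Module ℂ V]
    {fp : Fin k → ℕ} {A B : Fin k → Module.End ℂ V} {P : Module.End ℂ V} {v : V}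
    {c : Fin k} {α : ℂ} (hfp : ∀ i, fp i = 0 ∨ fp i = 1)
    (hpar : (∀ i, fp i = pa M i) ∨ (∀ i, fp i = 1 - pa M i))
    (hAA : ∀ i j, A i * A j = (-1 : ℂ) ^ (fp i * fp j) • (A j * A i))
    (hBB : ∀ i j, B i * B j = (-1 : ℂ) ^ (fp i * fp j) • (B j * B i))
    (hAB : ∀ i j, A i * B j = (-1 : ℂ) ^ (fp i * fp j) • (B j * A i) + if i = j then 1 else 0)
    (hPA : ∀ i, P * A i = (-1 : ℂ) ^ fp i • (A i * P))
    (hPB : ∀ i, P * B i = (-1 : ℂ) ^ fp i • (B i * P))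
    (hv : v ≠ 0) (hPv : P v = v) (hPP : P * P = 1)
    (hA : ∀ i, i ≠ c → A i v = 0) (hc : B c (A c v) = α • v) :
    ∃ (a b : Fin k → Module.End ℂ V) (μ : Fin k → ℂ), IsOscillator M fp a b P v μ ∧
      μ c = α ∧ ∀ i, c < i → μ i = 0 := by
  have hBA : ∀ i j, B i * A j = (-1 : ℂ) ^ (fp i * fp j) • (A j * B i) -
      if i = j then (-1 : ℂ) ^ fp i • 1 else 0 := by
    intro i j
    rw [hAB j i]
    have hs : (-1 : ℂ) ^ (fp i * fp j) * (-1 : ℂ) ^ (fp j * fp i) = 1 := by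
      rw [mul_comm (fp j), ← mul_pow]; simp
    rw [smul_add, smul_smul, hs, one_smul]
    by_cases e : i = j
    · subst e
      rcases hfp i with h | h <;> simp [h]
    · simp [e, Ne.symm e]
  let a : Fin k → Module.End ℂ V := fun i => if i < c then (-(-1 : ℂ) ^ fp i) • B i else A i
  let b : Fin k → Module.End ℂ V := fun i => if i < c then A i else B i
  have ha : ∀ i, i < c → a i = (-(-1 : ℂ) ^ fp i) • B i := fun i hi => if_pos hi
  have ha' : ∀ i, ¬ i < c → a i = A i := fun i hi => if_neg hi
  have hb : ∀ i, i < c → b i = A i := fun i hi => if_pos hi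
  have hb' : ∀ i, ¬ i < c → b i = B i := fun i hi => if_neg hi
  have hne : ∀ i j, i < c → ¬ j < c → i ≠ j := fun i j hi hj e => hj (e ▸ hi)
  have hab : ∀ i j, a i * b j = (-1 : ℂ) ^ (fp i * fp j) • (b j * a i) +
      if i = j then 1 else 0 := by
    intro i j
    by_cases hi : i < c <;> by_cases hj : j < c
    · rw [ha i hi, hb j hj, smul_mul_assoc, hBA i j, mul_smul_comm, smul_sub, smul_comm]
      by_cases e : i = j
      · subst e
        rcases hfp i with h | h <;> simp [h]
      · simp [e]
    · rw [ha i hi, hb' j hj, smul_mul_assoc, hBB i j, mul_smul_comm, smul_comm,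
        if_neg (hne i j hi hj), add_zero]
    · rw [ha' i hi, hb j hj, hAA i j, if_neg (hne j i hj hi).symm, add_zero]
    · rw [ha' i hi, hb' j hj, hAB i j]
  have hbv : ∀ i, i < c → b i v = 0 := fun i hi => by rw [hb i hi, hA i hi.ne]
  have hav : ∀ i, c < i → a i v = 0 := fun i hi => by rw [ha' i hi.not_gt, hA i hi.ne']
  have habv : ∀ i j, i < c → a j (b i v) = 0 := fun i j hi => by rw [hbv i hi, map_zero]
  have hsg : ∀ m : ℕ, (-1 : ℂ) ^ m * (-1 : ℂ) ^ m = 1 := fun m => by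
    rw [← mul_pow]; simp
  have hbav : ∀ i j, i < c → b i (a j v) =
      -((-1 : ℂ) ^ (fp j * fp i) • if j = i then v else 0) := by
    intro i j hi
    have := congrArg (fun T : Module.End ℂ V => (-1 : ℂ) ^ (fp j * fp i) • T v) (hab j i)
    simp only [Module.End.mul_apply, LinearMap.add_apply, LinearMap.smul_apply, smul_add,
      smul_smul, hsg, one_smul, habv i j hi, smul_zero] at this
    rw [eq_neg_iff_add_eq_zero, eq_comm]
    convert this using 3
    split_ifs <;> rfl
  refine ⟨a, b, fun i => if i < c then -(-1) ^ fp i else if i = c then α else 0,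
    ⟨hpar, ?_, ?_, hab, ?_, ?_, hv, hPv, hPP, ?_, ?_⟩, by simp, ?_⟩
  · intro i j
    by_cases hi : i < c <;> by_cases hj : j < c
    · rw [ha i hi, ha j hj, smul_mul_smul_comm, smul_mul_smul_comm, hBB i j, smul_comm,
        mul_comm (-(-1 : ℂ) ^ fp i)]
    · rw [ha i hi, ha' j hj, smul_mul_assoc, mul_smul_comm, hBA i j,
        if_neg (hne i j hi hj), sub_zero, smul_comm]
    · rw [ha' i hi, ha j hj, smul_mul_assoc, mul_smul_comm, hAB i j,
        if_neg (hne j i hj hi).symm, add_zero, smul_comm]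
    · rw [ha' i hi, ha' j hj, hAA i j]
  · intro i j
    by_cases hi : i < c <;> by_cases hj : j < c
    · rw [hb i hi, hb j hj, hAA i j]
    · rw [hb i hi, hb' j hj, hAB i j, if_neg (hne i j hi hj), add_zero]
    · rw [hb' i hi, hb j hj, hBA i j, if_neg (hne j i hj hi).symm, sub_zero]
    · rw [hb' i hi, hb' j hj, hBB i j]
  · intro i
    by_cases hi : i < c
    · rw [ha i hi, mul_smul_comm, hPB, smul_mul_assoc, smul_comm]
    · rw [ha' i hi, hPA]
  · intro i
    by_cases hi : i < c
    · rw [hb i hi, hPA]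
    · rw [hb' i hi, hPB]
  · intro i j hij
    by_cases hj : c < j
    · rw [hav j hj, map_zero]
    · rw [hbav i j (lt_of_lt_of_le hij (not_lt.1 hj)), if_neg hij.ne', smul_zero, neg_zero]
  · intro i
    rcases lt_trichotomy i c with hi | hi | hi
    · rw [hbav i i hi, if_pos rfl]
      rcases hfp i with h | h <;> simp [hi, h]
    · subst hi
      rw [ha' i (lt_irrefl i), hb' i (lt_irrefl i), hc]
      simp
    · rw [hav i hi, map_zero, if_neg hi.not_gt, if_neg hi.ne', zero_smul]
  · intro i hi
    simp only [if_neg hi.not_gt, if_neg hi.ne']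

section Fock

/-- The exterior algebra on `k` generators, the Fock space of `k` fermions. -/
abbrev Ext (k : ℕ) := CliffordAlgebra (0 : QuadraticForm ℂ (Fin k → ℂ))

/-- A Fock space of `k` bosons and `k` fermions. A function `f` on `ℤᵏ` is to be thought of as the
(possibly infinite) formal sum `∑ n, f n x^(n + ν)` with a shift `ν ∈ ℂᵏ` of the exponents. -/
abbrev Fock (k : ℕ) := (Fin k → ℤ) → Ext k

namespace Fock

variable {k : ℕ}

/-- Multiplication by the variable `x_i`. -/
def x (i : Fin k) : Module.End ℂ (Fock k) where
  toFun f n := f (n - Pi.single i 1)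
  map_add' _ _ := rfl
  map_smul' _ _ := rfl

/-- The derivative with respect to `x_i`, for exponents shifted by `ν`. -/
def d (ν : Fin k → ℂ) (i : Fin k) : Module.End ℂ (Fock k) where
  toFun f n := ((n i : ℂ) + 1 + ν i) • f (n + Pi.single i 1)
  map_add' f g := by ext n; simp
  map_smul' r f := by ext n; simp [smul_comm r]

/-- Pointwise action of the endomorphisms of the exterior algebra. -/
def pw : Module.End ℂ (Ext k) →ₐ[ℂ] Module.End ℂ (Fock k) :=
  AlgHom.ofLinearMap
    { toFun T := T.compLeft (Fin k → ℤ)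
      map_add' _ _ := rfl
      map_smul' _ _ := rfl } rfl (fun _ _ => rfl)

theorem pw_apply (T : Module.End ℂ (Ext k)) (f : Fock k) (n : Fin k → ℤ) : pw T f n = T (f n) := rfl

/-- Left multiplication by the `i`-th generator. -/
noncomputable def th (i : Fin k) : Module.End ℂ (Ext k) :=
  LinearMap.mulLeft ℂ (CliffordAlgebra.ι 0 (Pi.single i 1))

/-- Contraction with the `i`-th coordinate form. -/
noncomputable def dl (i : Fin k) : Module.End ℂ (Ext k) :=
  CliffordAlgebra.contractLeft (LinearMap.proj i : Module.Dual ℂ (Fin k → ℂ))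

theorem x_apply (i : Fin k) (f : Fock k) (n : Fin k → ℤ) : x i f n = f (n - Pi.single i 1) := rfl

theorem d_apply (ν : Fin k → ℂ) (i : Fin k) (f : Fock k) (n : Fin k → ℤ) :
    d ν i f n = ((n i : ℂ) + 1 + ν i) • f (n + Pi.single i 1) := rfl

theorem th_apply (i : Fin k) (y : Ext k) : th i y = CliffordAlgebra.ι 0 (Pi.single i 1) * y := rfl

theorem dl_apply (i : Fin k) (y : Ext k) : dl i y =
    CliffordAlgebra.contractLeft (LinearMap.proj i : Module.Dual ℂ (Fin k → ℂ)) y := rfl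

theorem x_x (i j : Fin k) : x i * x j = x j * x i := by
  refine LinearMap.ext fun f => funext fun n => ?_
  simp only [Module.End.mul_apply, x_apply, sub_right_comm]

theorem d_d (ν : Fin k → ℂ) (i j : Fin k) : d ν i * d ν j = d ν j * d ν i := by
  by_cases h : i = j
  · rw [h]
  refine LinearMap.ext fun f => funext fun n => ?_
  simp only [Module.End.mul_apply, d_apply]
  rw [add_right_comm n, smul_comm]
  simp [h, Ne.symm h]

theorem d_x (ν : Fin k → ℂ) (i j : Fin k) :
    d ν i * x j = x j * d ν i + if i = j then 1 else 0 := by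
  refine LinearMap.ext fun f => funext fun n => ?_
  by_cases h : i = j
  · subst h
    rw [if_pos rfl]
    simp only [LinearMap.add_apply, Pi.add_apply, Module.End.one_apply,
      Module.End.mul_apply, x_apply, d_apply, add_sub_cancel_right, sub_add_cancel]
    conv_rhs => rw [← one_smul ℂ (f n), smul_smul, ← add_smul]
    simp [add_right_comm]
  · rw [if_neg h, add_zero]
    simp only [Module.End.mul_apply, x_apply, d_apply]
    rw [add_sub_right_comm]
    simp [h]

theorem x_pw (i : Fin k) (T : Module.End ℂ (Ext k)) : x i * pw T = pw T * x i := rfl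

theorem d_pw (ν : Fin k → ℂ) (i : Fin k) (T : Module.End ℂ (Ext k)) :
    d ν i * pw T = pw T * d ν i := by
  refine LinearMap.ext fun f => funext fun n => ?_
  exact (T.map_smul _ _).symm

theorem th_th (i j : Fin k) : th i * th j = -(th j * th i) := by
  refine LinearMap.ext fun y => ?_
  rw [LinearMap.neg_apply, eq_neg_iff_add_eq_zero]
  simp only [Module.End.mul_apply, th_apply]
  rw [← mul_assoc, ← mul_assoc, ← add_mul, CliffordAlgebra.ι_mul_ι_add_swap]
  simp [QuadraticMap.polar]

theorem dl_dl (i j : Fin k) : dl i * dl j = -(dl j * dl i) := by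
  refine LinearMap.ext fun y => ?_
  exact CliffordAlgebra.contractLeft_comm _ _ _

theorem dl_th (i j : Fin k) : dl i * th j = -(th j * dl i) + if i = j then 1 else 0 := by
  refine LinearMap.ext fun y => ?_
  rw [Module.End.mul_apply, th_apply, dl_apply, CliffordAlgebra.contractLeft_ι_mul, sub_eq_neg_add,
    LinearMap.proj_apply, Pi.single_apply]
  congr 1
  split_ifs <;> simp

/-- The parity operator of the exterior algebra. -/
noncomputable def inv : Module.End ℂ (Ext k) := CliffordAlgebra.involute.toLinearMap

theorem inv_apply (y : Ext k) : inv y = CliffordAlgebra.involute y := rfl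

theorem inv_inv : inv * inv = (1 : Module.End ℂ (Ext k)) := by
  refine LinearMap.ext fun y => ?_
  exact CliffordAlgebra.involute_involute y

theorem inv_th (i : Fin k) : inv * th i = -(th i * inv) := by
  refine LinearMap.ext fun y => ?_
  rw [LinearMap.neg_apply, Module.End.mul_apply, Module.End.mul_apply, th_apply, th_apply,
    inv_apply, inv_apply, map_mul, CliffordAlgebra.involute_ι, neg_mul]

theorem inv_dl (i : Fin k) : inv * dl i = -(dl i * inv) := by
  refine LinearMap.ext fun y => ?_
  rw [LinearMap.neg_apply, Module.End.mul_apply, Module.End.mul_apply, dl_apply, dl_apply,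
    inv_apply, inv_apply]
  induction y using CliffordAlgebra.left_induction with
  | algebraMap r => simp
  | add y z hy hz => simp only [map_add, hy, hz, neg_add]
  | ι_mul y m hy =>
    rw [CliffordAlgebra.contractLeft_ι_mul, map_sub, map_smul, map_mul, map_mul,
      CliffordAlgebra.involute_ι, hy]
    simp only [neg_mul, mul_neg, map_neg, CliffordAlgebra.contractLeft_ι_mul]
    abel

/-- The `i`-th annihilation operator, bosonic or fermionic according to `fp i`. -/
noncomputable def ann (fp : Fin k → ℕ) (ν : Fin k → ℂ) (i : Fin k) : Module.End ℂ (Fock k) :=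
  if fp i = 0 then d ν i else pw (dl i)

/-- The `i`-th creation operator, bosonic or fermionic according to `fp i`. -/
noncomputable def cre (fp : Fin k → ℕ) (i : Fin k) : Module.End ℂ (Fock k) :=
  if fp i = 0 then x i else pw (th i)

variable {fp : Fin k → ℕ} {ν : Fin k → ℂ}

theorem neg_eq_smul (T : Module.End ℂ (Fock k)) : -T = (-1 : ℂ) • T := (neg_one_smul ℂ T).symm

theorem ann_ann (hfp : ∀ i, fp i = 0 ∨ fp i = 1) (i j : Fin k) :
    ann fp ν i * ann fp ν j = (-1 : ℂ) ^ (fp i * fp j) • (ann fp ν j * ann fp ν i) := by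
  unfold ann
  rcases hfp i with h | h <;> rcases hfp j with h' | h' <;> simp only [h, h'] <;> simp
  · exact d_d ν i j
  · exact d_pw _ _ _
  · exact (d_pw _ _ _).symm
  · rw [← map_mul, dl_dl, map_neg, map_mul, neg_eq_smul]

theorem cre_cre (hfp : ∀ i, fp i = 0 ∨ fp i = 1) (i j : Fin k) :
    cre fp i * cre fp j = (-1 : ℂ) ^ (fp i * fp j) • (cre fp j * cre fp i) := by
  unfold cre
  rcases hfp i with h | h <;> rcases hfp j with h' | h' <;> simp only [h, h'] <;> simp
  · exact x_x i j
  · exact x_pw _ _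
  · exact (x_pw _ _).symm
  · rw [← map_mul, th_th, map_neg, map_mul, neg_eq_smul]

theorem ann_cre (hfp : ∀ i, fp i = 0 ∨ fp i = 1) (i j : Fin k) :
    ann fp ν i * cre fp j = (-1 : ℂ) ^ (fp i * fp j) • (cre fp j * ann fp ν i) +
      if i = j then 1 else 0 := by
  by_cases hij : i = j
  · subst hij
    rw [if_pos rfl]
    unfold ann cre
    rcases hfp i with h | h <;> simp only [h] <;> simp
    · rw [d_x, if_pos rfl]
    · rw [← map_mul, dl_th, map_add, map_neg, map_mul, if_pos rfl, map_one, neg_eq_smul]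
  · rw [if_neg hij, add_zero]
    unfold ann cre
    rcases hfp i with h | h <;> rcases hfp j with h' | h' <;> simp only [h, h'] <;> simp
    · rw [d_x, if_neg hij, add_zero]
    · exact d_pw _ _ _
    · exact (x_pw _ _).symm
    · rw [← map_mul, dl_th, if_neg hij, add_zero, map_neg, map_mul, neg_eq_smul]

theorem inv_ann (hfp : ∀ i, fp i = 0 ∨ fp i = 1) (i : Fin k) :
    pw inv * ann fp ν i = (-1 : ℂ) ^ fp i • (ann fp ν i * pw inv) := by
  unfold ann
  rcases hfp i with h | h <;> simp only [h] <;> simp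
  · exact (d_pw _ _ _).symm
  · rw [← map_mul, inv_dl, map_neg, map_mul, neg_eq_smul]

theorem inv_cre (hfp : ∀ i, fp i = 0 ∨ fp i = 1) (i : Fin k) :
    pw inv * cre fp i = (-1 : ℂ) ^ fp i • (cre fp i * pw inv) := by
  unfold cre
  rcases hfp i with h | h <;> simp only [h] <;> simp
  · exact (x_pw _ _).symm
  · rw [← map_mul, inv_th, map_neg, map_mul, neg_eq_smul]

/-- The vacuum vector `x^ν`. -/
noncomputable def vac (k : ℕ) : Fock k := fun n => if n = 0 then 1 else 0

theorem vac_apply (n : Fin k → ℤ) : vac k n = if n = 0 then 1 else 0 := rfl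

theorem vac_ne_zero : vac k ≠ 0 := by
  intro h
  have := congrFun h 0
  simp [vac] at this

theorem inv_vac : pw inv (vac k) = vac k := by
  ext1 n
  rw [pw_apply, vac_apply]
  change CliffordAlgebra.involute _ = _
  split_ifs <;> simp

theorem ann_vac (i : Fin k) (hi : ν i = 0) : ann fp ν i (vac k) = 0 := by
  unfold ann
  split_ifs with h
  · ext1 n
    rw [d_apply, vac_apply]
    split_ifs with h
    · have : n i + 1 = 0 := by simpa using congrFun h i
      have : (n i : ℂ) + 1 = 0 := by exact_mod_cast this
      rw [hi, this]; simp
    · simp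
  · ext1 n
    rw [pw_apply, vac_apply]
    change CliffordAlgebra.contractLeft _ _ = _
    split_ifs <;> simp

theorem x_d_vac (i : Fin k) : x i (d ν i (vac k)) = ν i • vac k := by
  ext1 n
  rw [x_apply, d_apply, Pi.smul_apply, vac_apply, vac_apply, sub_add_cancel]
  split_ifs with h
  · simp [h]
  · simp

end Fock

/-- The shift is placed in the exponent of `x_c`, which makes `B c * A c = x_c ∂_c` act on `x^ν` by
an arbitrary scalar. -/
theorem exists_isOscillator (M : ℕ) {k : ℕ} (c : Fin k) (α : ℂ) :
    ∃ (fp : Fin k → ℕ) (a b : Fin k → Module.End ℂ (Fock k)) (P : Module.End ℂ (Fock k))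
      (v : Fock k) (μ : Fin k → ℂ),
      IsOscillator M fp a b P v μ ∧ μ c = α ∧ ∀ i, c < i → μ i = 0 := by
  -- the parities are reversed if necessary so that oscillator `c` is bosonic
  let fp : Fin k → ℕ := fun i => if pa M c = 0 then pa M i else 1 - pa M i
  have hpar : (∀ i, fp i = pa M i) ∨ (∀ i, fp i = 1 - pa M i) := by
    by_cases h : pa M c = 0
    · left; intro i; simp [fp, h]
    · right; intro i; simp [fp, h]
  have hfp : ∀ i, fp i = 0 ∨ fp i = 1 := by
    intro i
    rcases hpar with h | h <;> rw [h] <;> rcases pa_eq M i with e | e <;> simp [e]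
  have hc : fp c = 0 := by
    rcases pa_eq M c with e | e <;> simp [fp, e]
  let ν : Fin k → ℂ := Pi.single c α
  have hν : ∀ i, i ≠ c → ν i = 0 := fun i hi => Pi.single_eq_of_ne hi _
  obtain ⟨a, b, μ, h⟩ := exists_isOscillator_of_vacuum (A := Fock.ann fp ν) (B := Fock.cre fp)
    (P := Fock.pw Fock.inv) (v := Fock.vac k) (c := c) (α := α) hfp hpar (Fock.ann_ann hfp)
    (Fock.cre_cre hfp) (Fock.ann_cre hfp) (Fock.inv_ann hfp) (Fock.inv_cre hfp)
    Fock.vac_ne_zero Fock.inv_vac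
    (by rw [← map_mul, Fock.inv_inv, map_one]) (fun i hi => Fock.ann_vac i (hν i hi))
    (by
      rw [Fock.ann, Fock.cre, if_pos hc, if_pos hc, Fock.x_d_vac]
      simp [ν])
  exact ⟨fp, a, b, _, _, μ, h⟩

end Fock

/-! ### Approximation of arbitrary weights -/

section Approximation
open PowerSeries

/-- The tuple `f` is the highest weight of some twisted highest weight module. -/
def Realizable (M : ℕ) {k : ℕ} (f : Fin k → ℂ⟦X⟧) : Prop :=
  ∃ (V : Type) (_ : AddCommGroup V) (_ : Module ℂ V)
    (S : Fin k → Fin k → (Module.End ℂ V)⟦X⟧) (P : Module.End ℂ V) (v : V), IsTwisted M S P v f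

namespace Realizable

variable {M k : ℕ} {f g : Fin k → ℂ⟦X⟧}

theorem constantCoeff (h : Realizable M f) (i : Fin k) : PowerSeries.constantCoeff (f i) = 1 := by
  obtain ⟨V, _, _, S, P, v, h⟩ := h
  have hw := h.weight i 0
  have hPv : (P ^ pa M i) v = v := by
    rcases pa_eq M i with e | e <;> simp [e, h.P_vec]
  rw [h.zero, if_pos rfl, hPv, coeff_zero_eq_constantCoeff_apply] at hw
  exact (smul_left_injective ℂ h.ne (by simpa using hw)).symm

theorem mul (hf : Realizable M f) (hg : Realizable M g) : Realizable M (fun i => f i * g i) := by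
  obtain ⟨V, _, _, S, P, v, h⟩ := hf
  obtain ⟨V', _, _, S', P', v', h'⟩ := hg
  exact ⟨_, _, _, _, _, _, h.tensor h'⟩

theorem one (M k : ℕ) : Realizable M (fun _ : Fin k => 1) := by
  refine ⟨ℂ, inferInstance, inferInstance, fun i j => if i = j then 1 else 0, 1, 1,
    one_ne_zero, rfl, one_mul _, ?_, ?_, ?_, ?_, ?_⟩
  · intro i j n
    by_cases e : i = j
    · subst e
      rcases pa_eq M i with e | e <;> simp [e]
    · simp [e]
  · intro i j
    by_cases e : i = j <;> simp [e]
  · intro i j p q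
    by_cases e1 : i = j <;> by_cases e2 : p = q <;> by_cases e3 : p = j <;> by_cases e4 : i = q <;>
      simp_all [eps]
  · intro i j hij n
    simp [hij.ne]
  · intro i n
    rw [if_pos rfl, coeff_one, coeff_one]
    split_ifs <;> simp

theorem linear (M : ℕ) (c : Fin k) (α : ℂ) :
    ∃ f : Fin k → ℂ⟦X⟧, Realizable M f ∧ f c = 1 + C α * X ∧ ∀ i, c < i → f i = 1 := by
  obtain ⟨fp, a, b, P, v, μ, h, hc, hi⟩ := exists_isOscillator M c ((-1) ^ pa M c * α)
  refine ⟨_, ⟨_, _, _, _, _, _, h.isTwisted⟩, ?_, ?_⟩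
  · have : (-1 : ℂ) ^ pa M c * (-1) ^ pa M c = 1 := by rw [← mul_pow]; simp
    simp only [hc, ← mul_assoc, this, one_mul]
  · intro i h
    simp [hi i h]

/-- A polynomial with constant term `1` is a product of factors `1 + α X`, so it occurs at position
`c` in the highest weight of a tensor product of oscillator modules. -/
theorem poly (M : ℕ) (c : Fin k) (p : Polynomial ℂ) (hp : p.coeff 0 = 1) :
    ∃ f : Fin k → ℂ⟦X⟧, Realizable M f ∧ f c = (p : ℂ⟦X⟧) ∧ ∀ i, c < i → f i = 1 := by
  induction hn : p.natDegree generalizing p with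
  | zero =>
    refine ⟨_, one M k, ?_, fun _ _ => rfl⟩
    rw [Polynomial.eq_C_of_natDegree_eq_zero hn, hp]
    simp
  | succ n ih =>
    obtain ⟨r, hr⟩ := IsAlgClosed.exists_root p (by
      intro h
      rw [Polynomial.natDegree_eq_zero_iff_degree_le_zero.2 h.le] at hn
      omega)
    obtain ⟨q, hq⟩ := Polynomial.dvd_iff_isRoot.2 hr
    have h0 : -r * q.coeff 0 = 1 := by
      rw [← hp, hq, Polynomial.mul_coeff_zero]; simp
    have hr0 : r ≠ 0 := by
      rintro rfl
      simp at h0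
    have hq0 : q ≠ 0 := by
      rintro rfl
      simp at h0
    obtain ⟨f, hf, hfc, hfi⟩ := ih (Polynomial.C (-r) * q)
      (by rw [Polynomial.coeff_C_mul, h0]) (by
        rw [Polynomial.natDegree_C_mul (neg_ne_zero.2 hr0)]
        rw [hq, Polynomial.natDegree_mul (Polynomial.X_sub_C_ne_zero r) hq0,
          Polynomial.natDegree_X_sub_C] at hn
        omega)
    obtain ⟨g, hg, hgc, hgi⟩ := linear M c (-r⁻¹)
    refine ⟨_, hg.mul hf, ?_, fun i hi => by rw [hgi i hi, hfi i hi, one_mul]⟩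
    rw [hfc, hgc, hq]
    have : (1 + C (-r⁻¹) * X : ℂ⟦X⟧) =
        ((1 + Polynomial.C (-r⁻¹) * Polynomial.X : Polynomial ℂ) : ℂ⟦X⟧) := by simp
    rw [this, ← Polynomial.coe_mul]
    congr 1
    rw [← mul_assoc]
    congr 1
    rw [add_mul, one_mul, mul_right_comm, ← Polynomial.C_mul, neg_mul_neg, inv_mul_cancel₀ hr0]
    simp only [map_neg, Polynomial.C_1]
    ring

/-- Every tuple with constant terms `1` agrees with a realizable tuple modulo `X ^ (K + 1)`. The
positions are corrected from the last one down: adjusting position `c` by `poly` leaves the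
positions above `c` alone and changes those below `c` by known factors. -/
theorem approx (M K c : ℕ) (f : Fin k → ℂ⟦X⟧) (hf : ∀ i, PowerSeries.constantCoeff (f i) = 1)
    (hc : ∀ i : Fin k, c ≤ i → f i = 1) :
    ∃ g : Fin k → ℂ⟦X⟧, Realizable M g ∧ ∀ i, (X : ℂ⟦X⟧) ^ (K + 1) ∣ g i - f i := by
  induction c generalizing f with
  | zero =>
    refine ⟨_, one M k, fun i => ?_⟩
    rw [hc i (Nat.zero_le _), sub_self]
    exact dvd_zero _
  | succ c ih =>
    by_cases hck : c < k
    swap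
    · exact ih f hf fun i hi => absurd i.2 (by omega)
    let c' : Fin k := ⟨c, hck⟩
    obtain ⟨h, hh, hhc, hhi⟩ := poly M c' (trunc (K + 1) (f c')) (by
      rw [coeff_trunc, if_pos (Nat.succ_pos K), coeff_zero_eq_constantCoeff_apply, hf])
    obtain ⟨g, hg, hgf⟩ := ih (fun i => if (i : ℕ) < c then f i * (h i)⁻¹ else 1)
      (fun i => by
        split_ifs
        · simp [hf, hh.constantCoeff]
        · simp)
      (fun i hi => if_neg (by omega))
    refine ⟨_, hg.mul hh, fun i => ?_⟩
    have hgi := (hgf i).mul_right (h i)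
    rw [sub_mul] at hgi
    rcases lt_trichotomy (i : ℕ) c with hi | hi | hi
    · rwa [if_pos hi, mul_assoc, PowerSeries.inv_mul_cancel _ (by simp [hh.constantCoeff]),
        mul_one] at hgi
    · have hi' : i = c' := Fin.ext hi
      rw [if_neg (by omega), one_mul] at hgi
      subst hi'
      have ht : (X : ℂ⟦X⟧) ^ (K + 1) ∣ h c' - f c' := by
        rw [X_pow_dvd_iff]
        intro m hm
        rw [hhc, map_sub, Polynomial.coeff_coe, coeff_trunc, if_pos hm, sub_self]
      simpa using hgi.add ht
    · rw [if_neg (by omega), one_mul, hhi i hi] at hgi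
      rw [hhi i hi, hc i (by omega)]
      exact hgi

end Realizable

theorem exists_rep_approx (M N K : ℕ) (Λ : Fin (M + N) → ℕ → ℂ) :
    ∃ (V : Type) (_ : AddCommGroup V) (_ : Module ℂ V) (ρ : Y M N →ₐ[ℂ] Module.End ℂ V) (v : V),
      v ≠ 0 ∧ (∀ a b : Fin (M + N), a < b → ∀ n : ℕ, 1 ≤ n → ρ (t M N a b n) v = 0) ∧
      (∀ (a : Fin (M + N)) (n : ℕ), 1 ≤ n → n ≤ K → ρ (t M N a a n) v = Λ a n • v) := by
  obtain ⟨g, ⟨V, i1, i2, S, P, v, h⟩, hg⟩ := Realizable.approx M K (M + N)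
    (fun a : Fin (M + N) => mk fun n => if n = 0 then 1 else (-1) ^ pa M a * Λ a n)
    (fun i => by rw [← coeff_zero_eq_constantCoeff_apply, coeff_mk, if_pos rfl])
    (fun i hi => absurd i.2 (by omega))
  obtain ⟨ρ, h1, h2⟩ := h.exists_rep
  refine ⟨V, i1, i2, ρ, v, h.ne, h1, fun a n hn hnK => ?_⟩
  have := X_pow_dvd_iff.1 (hg a) n (by omega)
  rw [map_sub, sub_eq_zero, coeff_mk, if_neg (by omega)] at this
  rw [h2 a n hn, this, ← mul_assoc, ← mul_pow]
  simp

end Approximation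

/-! ### The maximal left ideal -/

section Ideal

/-- The left ideal generated by the `t^a_b[n]` with `a < b` and the `t^a_a[n] - λ_a[n]` with
`n ≤ K`. -/
def truncIdeal (M N : ℕ) (Λ : Fin (M + N) → ℕ → ℂ) (K : ℕ) : Submodule (Y M N) (Y M N) :=
  Submodule.span (Y M N)
    {y | (∃ a b n, a < b ∧ 1 ≤ n ∧ y = t M N a b n) ∨
      ∃ a n, 1 ≤ n ∧ n ≤ K ∧ y = t M N a a n - algebraMap ℂ (Y M N) (Λ a n)}

theorem one_notMem_truncIdeal (M N : ℕ) (Λ : Fin (M + N) → ℕ → ℂ) (K : ℕ) :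
    (1 : Y M N) ∉ truncIdeal M N Λ K := by
  obtain ⟨V, _, _, ρ, v, hv, h1, h2⟩ := exists_rep_approx M N K Λ
  have kill : ∀ y ∈ truncIdeal M N Λ K, ρ y v = 0 := by
    intro y hy
    induction hy using Submodule.span_induction with
    | mem y hy =>
      rcases hy with ⟨a, b, n, hab, hn, rfl⟩ | ⟨a, n, hn, hnK, rfl⟩
      · exact h1 a b hab n hn
      · rw [map_sub, AlgHom.commutes, LinearMap.sub_apply, h2 a n hn hnK,
          Module.algebraMap_end_apply, sub_self]
    | zero => simp
    | add x y _ _ hx hy => rw [map_add, LinearMap.add_apply, hx, hy, add_zero]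
    | smul r x _ hx => rw [smul_eq_mul, map_mul, Module.End.mul_apply, hx, map_zero]
  intro h
  exact hv (by simpa using kill 1 h)

/-- The truncated ideals form an increasing chain of proper left ideals, so their union is proper,
hence contained in a maximal left ideal. -/
theorem exists_maximal (M N : ℕ) (Λ : Fin (M + N) → ℕ → ℂ) :
    ∃ m : Submodule (Y M N) (Y M N), IsCoatom m ∧ ∀ K, truncIdeal M N Λ K ≤ m := by
  have hdir : Directed (· ≤ ·) (truncIdeal M N Λ) := by
    refine directed_of_isDirected_le fun K L hKL => Submodule.span_mono ?_
    rintro y (h | ⟨a, n, hn, hnK, rfl⟩)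
    · exact Or.inl h
    · exact Or.inr ⟨a, n, hn, hnK.trans hKL, rfl⟩
  have hne : (⨆ K, truncIdeal M N Λ K) ≠ ⊤ := by
    intro h
    have h1 : (1 : Y M N) ∈ ⨆ K, truncIdeal M N Λ K := h ▸ Submodule.mem_top
    obtain ⟨K, hK⟩ := (Submodule.mem_iSup_of_directed _ hdir).1 h1
    exact one_notMem_truncIdeal M N Λ K hK
  obtain ⟨m, hm, hle⟩ := Ideal.exists_le_maximal _ hne
  exact ⟨m, hm.out, fun K => (le_iSup _ K).trans hle⟩

end Ideal

/-- **Existence of irreducible highest weight modules**: for every weight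
`Λ = (λ_a[n])` there exists an irreducible `Y(gl(M|N))`-module containing a maximal vector
of weight `Λ`. -/
theorem exists_irreducible_highest_weight (M N : ℕ) (hMN : 1 ≤ M + N)
    (Λ : Fin (M + N) → ℕ → ℂ) :
    ∃ (V : ModuleCat ℂ) (ρ : Y M N →ₐ[ℂ] Module.End ℂ V),
      IsIrreducibleRep M N ρ ∧ ∃ v : V, IsMaximalVec M N ρ v Λ := by
  obtain ⟨m, hm, hle⟩ := exists_maximal M N Λ
  -- the lift to the universe of the statement is simple as well
  have hquot : IsSimpleModule (Y M N) (Y M N ⧸ m) := isSimpleModule_iff_isCoatom.2 hm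
  have hsimple : IsSimpleModule (Y M N) (ULift (Y M N ⧸ m)) :=
    IsSimpleModule.congr (ULift.moduleEquiv (R := Y M N) (M := Y M N ⧸ m))
  have hv : ULift.up (Submodule.Quotient.mk 1 : Y M N ⧸ m) ≠ 0 := by
    intro h
    have h1 : (Submodule.Quotient.mk 1 : Y M N ⧸ m) = 0 := congrArg ULift.down h
    exact hm.1 ((Ideal.eq_top_iff_one m).2 ((Submodule.Quotient.mk_eq_zero m).1 h1))
  refine ⟨ModuleCat.of ℂ (ULift (Y M N ⧸ m)), Algebra.lsmul ℂ ℂ (ULift (Y M N ⧸ m)),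
    ⟨⟨_, hv⟩, fun W hW => ?_⟩, ULift.up (Submodule.Quotient.mk 1), hv, fun a b hab n hn => ?_,
    fun a n hn => ?_⟩
  · let W' : Submodule (Y M N) (ULift (Y M N ⧸ m)) :=
      { carrier := W
        add_mem' := W.add_mem
        zero_mem' := W.zero_mem
        smul_mem' := fun y w hw => hW y w hw }
    have hmem : ∀ w, w ∈ W' ↔ w ∈ W := fun _ => Iff.rfl
    rcases eq_bot_or_eq_top W' with h | h
    · exact Or.inl (eq_bot_iff.2 fun w hw => by
        rw [← hmem, h, Submodule.mem_bot] at hw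
        exact (Submodule.mem_bot ℂ).2 hw)
    · exact Or.inr (eq_top_iff.2 fun w _ => by
        rw [← hmem, h]
        exact Submodule.mem_top)
  · have key : (Submodule.Quotient.mk (t M N a b n • 1) : Y M N ⧸ m) = 0 := by
      rw [Submodule.Quotient.mk_eq_zero, smul_eq_mul, mul_one]
      exact hle 0 (Submodule.subset_span (Or.inl ⟨a, b, n, hab, hn, rfl⟩))
    exact congrArg ULift.up key
  · have key : (Submodule.Quotient.mk (t M N a a n • 1) : Y M N ⧸ m) =
        Submodule.Quotient.mk (Λ a n • 1) := by
      rw [Submodule.Quotient.eq, smul_eq_mul, mul_one, ← Algebra.algebraMap_eq_smul_one]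
      exact hle n (Submodule.subset_span (Or.inr ⟨a, n, hn, le_rfl, rfl⟩))
    exact congrArg ULift.up key

end SY
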